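/- arXiv:1510.06181 — 2 statements merged into one kernel-verified Lean document; each statement's English description precedes it below -/
import Mathlib

section
/- Let R be a noetherian integral domain with fraction field K and let A be a finite flat R-algebra. For any partition P in the image Γ_A of γ_A, the closure of the stratum Γ_A(P) = γ_A^{-1}(P) in Spec(R) is contained in the skeleton Γ_A^≤(P) = ⋃_{P' ≤ P} γ_A^{-1}(P'). In particular, the decomposition Spec(R) = ⨿_{P ∈ Γ_A} Γ_A(P) is a stratification of Spec(R). -/
open TensorProduct

section BlockDefs
variable {B : Type*} [Ring B]

/-- `e` is a centrally-primitive ("block") idempotent of the subring of `B` with carrier `S`: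
it is a nonzero idempotent of `S`, central in `S`, and not the sum of two nonzero orthogonal
central idempotents of `S`. -/
def IsBlockIdemOn (S : Set B) (e : B) : Prop :=
  e ∈ S ∧ IsIdempotentElem e ∧ e ≠ 0 ∧ (∀ x ∈ S, e * x = x * e) ∧
    ∀ f g : B, f ∈ S → g ∈ S → (∀ x ∈ S, f * x = x * f) → (∀ x ∈ S, g * x = x * g) →
      IsIdempotentElem f → IsIdempotentElem g → f * g = 0 → f + g = e → f = 0 ∨ g = 0

/-- `e` is a centrally-primitive ("block") idempotent of the ring `B`. -/
def IsBlockIdem (e : B) : Prop := IsBlockIdemOn Set.univ e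

end BlockDefs

/-- The subring `A_p` of `A^K = K ⊗[R] A`: elements of the form `a/s` with `s ∉ p`. -/
def localizedAt (R : Type*) [CommRing R] [IsDomain R] (A : Type*) [Ring A] [Algebra R A]
    (p : PrimeSpectrum R) : Set (FractionRing R ⊗[R] A) :=
  {x | ∃ (a : A) (s : R), s ∉ p.asIdeal ∧ s • x = Algebra.TensorProduct.includeRight a}

/-- Two elements of `A^K` (typically block idempotents of `A^K`) lie in the same block of the
localization `A_p`, i.e. there is a block idempotent of `A_p` acting as the identity on both. -/
def inSameBlockAt (R : Type*) [CommRing R] [IsDomain R] (A : Type*) [Ring A] [Algebra R A]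
    (p : PrimeSpectrum R) (c d : FractionRing R ⊗[R] A) : Prop :=
  ∃ e, IsBlockIdemOn (localizedAt R A p) e ∧ e * c = c ∧ e * d = d

variable (R : Type*) [CommRing R] [IsDomain R] (A : Type*) [Ring A] [Algebra R A]

/-!
Call two blocks `c`, `d` of `A^K` separated by a central idempotent `e` of `A^K` if `e` acts as the
identity on exactly one of them. They lie in the same block of `A_p` iff no central idempotent of
`A_p` separates them. A given `e` lies in `A_p` for all `p` in an open subset of `Spec R`, namely
where some denominator of `e` does not vanish; hence lying in the same block is a closed condition
on `p`. Since `A^K` is finite-dimensional it has only finitely many central idempotents, so each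
stratum is cut out by finitely many closed conditions and their negations, and the closure of a
stratum can only acquire further coincidences of blocks.
-/

section CentralIdempotents

variable {B : Type*} [Ring B]

/-- `e` is an idempotent of the center of the subring `S` of `B`, viewed as an element of `B`. The
block idempotents of `S` are the primitive ones among these. -/
structure IsCentralIdemOn (S : Subring B) (e : B) : Prop where
  mem : e ∈ S
  isIdempotentElem : IsIdempotentElem e
  commute : ∀ x ∈ S, Commute e x

variable {S : Subring B} {c d e f : B}

namespace IsCentralIdemOn

theorem one (S : Subring B) : IsCentralIdemOn S 1 :=
  ⟨S.one_mem, .one, fun x _ => .one_left x⟩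

theorem one_sub (he : IsCentralIdemOn S e) : IsCentralIdemOn S (1 - e) :=
  ⟨S.sub_mem S.one_mem he.mem, he.isIdempotentElem.one_sub,
    fun x hx => (Commute.one_left x).sub_left (he.commute x hx)⟩

theorem mul (he : IsCentralIdemOn S e) (hf : IsCentralIdemOn S f) : IsCentralIdemOn S (e * f) :=
  ⟨S.mul_mem he.mem hf.mem,
    he.isIdempotentElem.mul_of_commute (he.commute f hf.mem) hf.isIdempotentElem,
    fun x hx => (he.commute x hx).mul_left (hf.commute x hx)⟩

theorem to_top (hS : Set.centralizer (S : Set B) ⊆ Set.center B) (he : IsCentralIdemOn S e) :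
    IsCentralIdemOn ⊤ e :=
  have he_center : e ∈ Set.center B := hS fun x hx => (he.commute x hx).symm
  ⟨Subring.mem_top e, he.isIdempotentElem, fun x _ => he_center.comm x⟩

end IsCentralIdemOn

namespace IsBlockIdemOn

theorem isCentralIdemOn (he : IsBlockIdemOn (S : Set B) e) : IsCentralIdemOn S e :=
  ⟨he.1, he.2.1, he.2.2.2.1⟩

theorem ne_zero {S : Set B} (he : IsBlockIdemOn S e) : e ≠ 0 :=
  he.2.2.1

theorem mul_eq_self_or_eq_zero (hc : IsBlockIdemOn (S : Set B) c) (he : IsCentralIdemOn S e) :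
    e * c = c ∨ e * c = 0 := by
  have hec := he.mul hc.isCentralIdemOn
  have hec' := he.one_sub.mul hc.isCentralIdemOn
  have orthogonal : e * c * ((1 - e) * c) = 0 := by
    rw [mul_assoc, (hc.isCentralIdemOn.commute _ hec'.mem).eq, ← mul_assoc, ← mul_assoc,
      he.isIdempotentElem.mul_one_sub_self, zero_mul, zero_mul]
  have sum_eq : e * c + (1 - e) * c = c := by rw [← add_mul, add_sub_cancel, one_mul]
  obtain ⟨-, -, -, -, primitive⟩ := hc
  rcases primitive _ _ hec.mem hec'.mem hec.commute hec'.commute hec.isIdempotentElem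
    hec'.isIdempotentElem orthogonal sum_eq with h | h
  · exact .inr h
  · rw [h, add_zero] at sum_eq
    exact .inl sum_eq

end IsBlockIdemOn

theorem IsBlockIdem.isCentralIdemOn_top (hc : IsBlockIdem c) : IsCentralIdemOn ⊤ c :=
  IsBlockIdemOn.isCentralIdemOn (by rwa [Subring.coe_top])

theorem IsBlockIdem.mul_eq_self_or_eq_zero (hc : IsBlockIdem c) (he : IsCentralIdemOn ⊤ e) :
    e * c = c ∨ e * c = 0 :=
  IsBlockIdemOn.mul_eq_self_or_eq_zero (by rwa [Subring.coe_top]) he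

-- The witness is a minimal one among the central idempotents of `S` acting as the identity on `c`.
theorem exists_isBlockIdemOn_mul_eq_self (hfin : {e | IsCentralIdemOn S e}.Finite) (hc₀ : c ≠ 0)
    (hc : ∀ e, IsCentralIdemOn S e → e * c = c ∨ e * c = 0) :
    ∃ e, IsBlockIdemOn (S : Set B) e ∧ e * c = c := by
  obtain ⟨e, ⟨he, hec⟩, hmin⟩ :=
    (hfin.subset (Set.sep_subset _ fun e => e * c = c)).exists_minimalFor
      (fun e => Ideal.span {e}) _ ⟨1, .one S, one_mul c⟩
  have summand_eq_zero {f g : B} (hf : IsCentralIdemOn S f) (hg : IsIdempotentElem g)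
      (hfg : f * g = 0) (hsum : f + g = e) (hfc : f * c = c) : g = 0 := by
    have f_eq : f * e = f := by rw [← hsum, mul_add, hf.isIdempotentElem.eq, hfg, add_zero]
    have e_mem : e ∈ Ideal.span {f} :=
      (Ideal.span_singleton_le_iff_mem _).1 <| hmin ⟨hf, hfc⟩ <|
        (Ideal.span_singleton_le_iff_mem _).2 <| Ideal.mem_span_singleton'.2 ⟨f, f_eq⟩
    obtain ⟨x, rfl⟩ := Ideal.mem_span_singleton'.1 e_mem
    calc g = (f + g) * g := by rw [add_mul, hfg, zero_add, hg.eq]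
      _ = 0 := by rw [hsum, mul_assoc, hfg, mul_zero]
  refine ⟨e, ⟨he.mem, he.isIdempotentElem, ?_, he.commute, ?_⟩, hec⟩
  · rintro rfl
    exact hc₀ (by rw [← hec, zero_mul])
  · intro f g hfS hgS hf_comm hg_comm hf hg hfg hsum
    have hf' : IsCentralIdemOn S f := ⟨hfS, hf, hf_comm⟩
    have hg' : IsCentralIdemOn S g := ⟨hgS, hg, hg_comm⟩
    rcases hc f hf' with hfc | hfc
    · exact .inr (summand_eq_zero hf' hg hfg hsum hfc)
    · have hgc : g * c = c := by rw [← hec, ← hsum, add_mul, hfc, zero_add, ← mul_assoc, hg.eq]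
      exact .inl (summand_eq_zero hg' hf (by rw [hg_comm f hfS, hfg]) (by rw [add_comm, hsum]) hgc)

theorem exists_isBlockIdemOn_mul_eq_self_iff (hfin : {e | IsCentralIdemOn S e}.Finite)
    (hc₀ : c ≠ 0) (hd₀ : d ≠ 0) (hc : ∀ e, IsCentralIdemOn S e → e * c = c ∨ e * c = 0) :
    (∃ e, IsBlockIdemOn (S : Set B) e ∧ e * c = c ∧ e * d = d) ↔
      ∀ e, IsCentralIdemOn S e → (e * c = c ↔ e * d = d) := by
  constructor
  · rintro ⟨b, hb, hbc, hbd⟩ e he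
    rcases hb.mul_eq_self_or_eq_zero he with heb | heb
    · have fixes {x : B} (hbx : b * x = x) : e * x = x := by rw [← hbx, ← mul_assoc, heb]
      exact iff_of_true (fixes hbc) (fixes hbd)
    · have kills {x : B} (hbx : b * x = x) : e * x = 0 := by rw [← hbx, ← mul_assoc, heb, zero_mul]
      rw [kills hbc, kills hbd]
      exact iff_of_false hc₀.symm hd₀.symm
  · intro h
    obtain ⟨e, he, hec⟩ := exists_isBlockIdemOn_mul_eq_self hfin hc₀ hc
    exact ⟨e, he, hec, (h e he.isCentralIdemOn).1 hec⟩

theorem finite_isIdempotentElem (Z : Type*) [CommRing Z] [Finite (PrimeSpectrum Z)] :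
    {e : Z | IsIdempotentElem e}.Finite := by
  have : Finite (TopologicalSpace.Clopens (PrimeSpectrum Z)) :=
    .of_injective _ SetLike.coe_injective
  exact .of_equiv _ PrimeSpectrum.isIdempotentElemEquivClopens.toEquiv.symm

theorem finite_isCentralIdemOn_top (k : Type*) [CommRing k] [IsArtinianRing k] [Algebra k B]
    [Module.Finite k B] : {e : B | IsCentralIdemOn ⊤ e}.Finite := by
  let Z := Subalgebra.center k B
  have : Module.Finite k Z := .of_injective Z.val.toLinearMap Subtype.val_injective
  have : IsArtinianRing Z := .of_finite k Z
  refine ((finite_isIdempotentElem Z).image Subtype.val).subset fun e he => ?_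
  have he_center : e ∈ Z :=
    Subalgebra.mem_center_iff.2 fun b => (he.commute b (Subring.mem_top b)).symm.eq
  exact ⟨⟨e, he_center⟩, Subtype.ext he.isIdempotentElem, rfl⟩

end CentralIdempotents

section FiniteClosedConditions

variable {X ι : Type*} [TopologicalSpace X] {Z : ι → Set X}

theorem isClosed_forall_mem_imp_mem (hZ : ∀ i, IsClosed (Z i)) (x₀ : X) :
    IsClosed {x | ∀ i, x₀ ∈ Z i → x ∈ Z i} := by
  simp only [Set.ofPred_forall]
  exact isClosed_iInter fun i => isClosed_iInter fun _ => hZ i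

theorem isLocallyClosed_forall_mem_iff_mem [Finite ι] (hZ : ∀ i, IsClosed (Z i)) (x₀ : X) :
    IsLocallyClosed {x | ∀ i, x₀ ∈ Z i ↔ x ∈ Z i} := by
  have isOpen_forall : IsOpen {x | ∀ i, x ∈ Z i → x₀ ∈ Z i} := by
    simp only [imp_iff_not_or, Set.ofPred_forall]
    exact isOpen_iInter_of_finite fun i => (hZ i).isOpen_compl.union isOpen_const
  convert isOpen_forall.isLocallyClosed.inter (isClosed_forall_mem_imp_mem hZ x₀).isLocallyClosed
  ext x
  simp only [Set.mem_inter_iff, Set.mem_ofPred_eq, iff_def, forall_and, and_comm]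

theorem closure_forall_mem_iff_mem_subset (hZ : ∀ i, IsClosed (Z i)) (x₀ : X) :
    closure {x | ∀ i, x₀ ∈ Z i ↔ x ∈ Z i} ⊆ {x | ∀ i, x₀ ∈ Z i → x ∈ Z i} :=
  closure_minimal (fun _ hx i => (hx i).1) (isClosed_forall_mem_imp_mem hZ x₀)

end FiniteClosedConditions

section LocalBlocks

theorem centralizer_range_includeRight_subset_center (R K A : Type*) [CommRing R] [CommRing K]
    [Algebra R K] [Ring A] [Algebra R A] :
    Set.centralizer (Set.range (Algebra.TensorProduct.includeRight : A →ₐ[R] K ⊗[R] A)) ⊆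
      Set.center (K ⊗[R] A) := by
  intro e he
  refine Semigroup.mem_center_iff.2 fun x => ?_
  induction x with
  | zero => rw [zero_mul, mul_zero]
  | add x y hx hy => rw [add_mul, mul_add, hx, hy]
  | tmul k a =>
    have k_smul : k ⊗ₜ[R] a = k • (Algebra.TensorProduct.includeRight a : K ⊗[R] A) := by
      rw [Algebra.TensorProduct.includeRight_apply, TensorProduct.smul_tmul', smul_eq_mul, mul_one]
    rw [k_smul, smul_mul_assoc, mul_smul_comm, he _ ⟨a, rfl⟩]

/-- The set `localizedAt R A p`, i.e. `A_p` (more precisely its image in `A^K`), as a subring. -/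
def localizedSubring (p : PrimeSpectrum R) : Subring (FractionRing R ⊗[R] A) where
  carrier := localizedAt R A p
  one_mem' := ⟨1, 1, p.asIdeal.one_notMem, by rw [map_one, one_smul]⟩
  zero_mem' := ⟨0, 1, p.asIdeal.one_notMem, by rw [map_zero, smul_zero]⟩
  mul_mem' := by
    rintro x y ⟨a, s, hs, hx⟩ ⟨b, t, ht, hy⟩
    exact ⟨a * b, s * t, p.asIdeal.primeCompl.mul_mem hs ht, by
      rw [map_mul, ← hx, ← hy, smul_mul_smul_comm]⟩
  add_mem' := by
    rintro x y ⟨a, s, hs, hx⟩ ⟨b, t, ht, hy⟩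
    exact ⟨t • a + s • b, s * t, p.asIdeal.primeCompl.mul_mem hs ht, by
      rw [map_add, map_smul, map_smul, ← hx, ← hy, smul_add, smul_smul, smul_smul, mul_comm t s]⟩
  neg_mem' := by
    rintro x ⟨a, s, hs, hx⟩
    exact ⟨-a, s, hs, by rw [map_neg, ← hx, smul_neg]⟩

theorem centralizer_localizedSubring_subset_center (p : PrimeSpectrum R) :
    Set.centralizer (localizedSubring R A p : Set (FractionRing R ⊗[R] A)) ⊆
      Set.center (FractionRing R ⊗[R] A) := by
  refine (Set.centralizer_subset ?_).trans
    (centralizer_range_includeRight_subset_center R (FractionRing R) A)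
  rintro _ ⟨a, rfl⟩
  exact ⟨a, 1, p.asIdeal.one_notMem, one_smul R _⟩

theorem isOpen_mem_localizedSubring (x : FractionRing R ⊗[R] A) :
    IsOpen {p : PrimeSpectrum R | x ∈ localizedSubring R A p} := by
  have eq_iUnion : {p : PrimeSpectrum R | x ∈ localizedSubring R A p} =
      ⋃ (a : A) (s : R) (_ : s • x = Algebra.TensorProduct.includeRight a),
        (PrimeSpectrum.basicOpen s : Set (PrimeSpectrum R)) := by
    ext p
    simp only [Set.mem_iUnion, SetLike.mem_coe, PrimeSpectrum.mem_basicOpen, exists_prop]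
    exact exists₂_congr fun _ _ => and_comm
  rw [eq_iUnion]
  exact isOpen_iUnion fun a => isOpen_iUnion fun s => isOpen_iUnion fun _ =>
    PrimeSpectrum.isOpen_basicOpen

variable {R A} [Module.Finite (FractionRing R) (FractionRing R ⊗[R] A)]
  {c d : FractionRing R ⊗[R] A}

theorem inSameBlockAt_iff (hc : IsBlockIdem c) (hd : IsBlockIdem d) (p : PrimeSpectrum R) :
    inSameBlockAt R A p c d ↔
      ∀ e, IsCentralIdemOn ⊤ e → e ∈ localizedSubring R A p → (e * c = c ↔ e * d = d) := by
  have central_in_top {e} : IsCentralIdemOn (localizedSubring R A p) e → IsCentralIdemOn ⊤ e :=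
    .to_top (centralizer_localizedSubring_subset_center R A p)
  have hfin : {e | IsCentralIdemOn (localizedSubring R A p) e}.Finite :=
    (finite_isCentralIdemOn_top (FractionRing R)).subset fun _ => central_in_top
  refine (exists_isBlockIdemOn_mul_eq_self_iff hfin hc.ne_zero hd.ne_zero fun e he =>
    hc.mul_eq_self_or_eq_zero (central_in_top he)).trans (forall_congr' fun e => ?_)
  exact ⟨fun h he hep => h ⟨hep, he.isIdempotentElem, fun x _ => he.commute x trivial⟩,
    fun h he => h (central_in_top he) he.mem⟩

theorem isClosed_inSameBlockAt (hc : IsBlockIdem c) (hd : IsBlockIdem d) :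
    IsClosed {p : PrimeSpectrum R | inSameBlockAt R A p c d} := by
  simp only [inSameBlockAt_iff hc hd, Set.ofPred_forall]
  exact isClosed_iInter fun e => isClosed_iInter fun _ =>
    isClosed_imp (isOpen_mem_localizedSubring R A e) isClosed_const

end LocalBlocks

theorem stmt2_general [Module.Finite (FractionRing R) (FractionRing R ⊗[R] A)]
    (p₀ : PrimeSpectrum R) :
    IsLocallyClosed {q : PrimeSpectrum R | ∀ c d : FractionRing R ⊗[R] A,
        IsBlockIdem c → IsBlockIdem d →
          (inSameBlockAt R A p₀ c d ↔ inSameBlockAt R A q c d)} ∧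
    closure {q : PrimeSpectrum R | ∀ c d : FractionRing R ⊗[R] A,
        IsBlockIdem c → IsBlockIdem d →
          (inSameBlockAt R A p₀ c d ↔ inSameBlockAt R A q c d)} ⊆
      {q : PrimeSpectrum R | ∀ c d : FractionRing R ⊗[R] A,
        IsBlockIdem c → IsBlockIdem d → inSameBlockAt R A p₀ c d → inSameBlockAt R A q c d} := by
  let Block := {c : FractionRing R ⊗[R] A // IsBlockIdem c}
  have : Finite Block := ((finite_isCentralIdemOn_top (FractionRing R)).subset
    fun _ hc => IsBlockIdem.isCentralIdemOn_top hc).to_subtype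
  let Z (i : Block × Block) : Set (PrimeSpectrum R) := {q | inSameBlockAt R A q i.1 i.2}
  have hZ (i : Block × Block) : IsClosed (Z i) := isClosed_inSameBlockAt i.1.2 i.2.2
  have forall_blocks (P : FractionRing R ⊗[R] A → FractionRing R ⊗[R] A → Prop) :
      (∀ c d, IsBlockIdem c → IsBlockIdem d → P c d) ↔ ∀ i : Block × Block, P i.1 i.2 :=
    ⟨fun h i => h _ _ i.1.2 i.2.2, fun h c d hc hd => h (⟨c, hc⟩, ⟨d, hd⟩)⟩
  simp only [forall_blocks]
  exact ⟨isLocallyClosed_forall_mem_iff_mem hZ p₀, closure_forall_mem_iff_mem_subset hZ p₀⟩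

/-- For noetherian `R`, the closure of the stratum `Γ_A(P) = {q | γ_A(q) = γ_A(p₀)}` is contained
in the skeleton `Γ_A^≤(P) = {q | γ_A(q) ≤ γ_A(p₀)}`; together with local closedness of the strata
this says that the decomposition of `Spec R` by local block structures is a stratification. -/
theorem stmt2 [IsNoetherianRing R] [Module.Finite R A] [Module.Flat R A]
    (p₀ : PrimeSpectrum R) :
    IsLocallyClosed {q : PrimeSpectrum R | ∀ c d : FractionRing R ⊗[R] A,
        IsBlockIdem c → IsBlockIdem d →
          (inSameBlockAt R A p₀ c d ↔ inSameBlockAt R A q c d)} ∧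
    closure {q : PrimeSpectrum R | ∀ c d : FractionRing R ⊗[R] A,
        IsBlockIdem c → IsBlockIdem d →
          (inSameBlockAt R A p₀ c d ↔ inSameBlockAt R A q c d)} ⊆
      {q : PrimeSpectrum R | ∀ c d : FractionRing R ⊗[R] A,
        IsBlockIdem c → IsBlockIdem d → inSameBlockAt R A p₀ c d → inSameBlockAt R A q c d} :=
  stmt2_general R A p₀
end

section
/- Let R be a noetherian integral domain, let A be a finite flat R-algebra with center Z, and let Υ: Spec(Z) → Spec(R) be the morphism induced by the (injective) structure map R → Z. Then for every p ∈ Spec(R): (i) every block idempotent of the fiber A(p) lies in the central subalgebra Z_p(A) := (Z_p + p_pA_p)/p_pA_p, i.e. the inclusion Z_p(A) ⊆ A(p) is block bijective; and (ii) there are canonical bijections Bl(A(p)) ≅ Bl(Z_p(A)) ≅ Bl(Z(p)) ≅ Υ^{-1}(p), where Z(p) = Z_p/p_pZ_p; in particular, the number of blocks of A(p) equals the number of prime ideals of Z lying over p. -/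
open TensorProduct

noncomputable def numBlocks (B : Type*) [Ring B] : ℕ := Nat.card {e : B // IsBlockIdem e}

noncomputable abbrev resFieldAt (R : Type*) [CommRing R] (p : PrimeSpectrum R) :=
  IsLocalRing.ResidueField (Localization.AtPrime p.asIdeal)

/-!
Let `L = R_p` with maximal ideal `m` and `B = L ⊗ A`, so that `A(p) = B / mB`. A central idempotent
of `A(p)` lifts to an idempotent `e` of `B / mⁿB`, and `e` is still central: `x ↦ e x (1 - e)` is an
idempotent endomorphism with image in `mB / mⁿB`, hence zero, and likewise for `1 - e`. A lift of
`e` to `B` is thus killed modulo `mⁿ` by the map sending `b` to its commutators with generators of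
`B`, and Artin–Rees for that map corrects it to a truly central element of `B`. As the center
commutes with the flat base change to `L`, all central idempotents of `A(p)` come from `Z(p)`. The
kernel of `Z(p) → A(p)` is nil by Cayley–Hamilton, so both rings have the same Boolean algebra of
central idempotents. Blocks are its atoms, and for the artinian ring `Z(p)` these are the points of
`Spec Z(p)`, that is, the primes of `Z` over `p`.
-/

section IdealSmul

variable {L M N : Type*} [CommRing L] [AddCommGroup M] [Module L M] [AddCommGroup N] [Module L N]

theorem range_pow_le_pow_smul_top {I : Ideal L} {f : Module.End L M}
    (hf : LinearMap.range f ≤ I • ⊤) (n : ℕ) : LinearMap.range (f ^ n) ≤ I ^ n • ⊤ := by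
  induction n with
  | zero => simp
  | succ n ih =>
    calc LinearMap.range (f ^ (n + 1))
        = (LinearMap.range (f ^ n)).map f := by
          rw [pow_succ', Module.End.mul_eq_comp, LinearMap.range_comp]
      _ ≤ (I ^ n • ⊤ : Submodule L M).map f := Submodule.map_mono ih
      _ = I ^ n • LinearMap.range f := by rw [Submodule.map_smul'', Submodule.map_top]
      _ ≤ I ^ n • I • ⊤ := Submodule.smul_mono le_rfl hf
      _ = I ^ (n + 1) • ⊤ := by rw [pow_succ, mul_smul]

theorem exists_comap_pow_smul_top_le_smul_top_sup_ker [IsNoetherianRing L] [Module.Finite L N]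
    (I : Ideal L) (f : M →ₗ[L] N) :
    ∃ n, (I ^ n • ⊤ : Submodule L N).comap f ≤ I • ⊤ ⊔ LinearMap.ker f := by
  obtain ⟨k, hk⟩ := Ideal.exists_pow_inf_eq_pow_smul I (LinearMap.range f)
  refine ⟨k + 1, ?_⟩
  have artin_rees : I ^ (k + 1) • ⊤ ⊓ LinearMap.range f ≤ (I • ⊤ : Submodule L M).map f :=
    calc I ^ (k + 1) • ⊤ ⊓ LinearMap.range f
        = I • (I ^ k • ⊤ ⊓ LinearMap.range f) := by
          rw [hk _ (Nat.le_add_right k 1), Nat.add_sub_cancel_left, pow_one]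
      _ ≤ I • LinearMap.range f := Submodule.smul_mono le_rfl inf_le_right
      _ = (I • ⊤ : Submodule L M).map f := by rw [Submodule.map_smul'', Submodule.map_top]
  rw [← Submodule.comap_map_eq]
  exact fun x hx ↦ artin_rees ⟨hx, x, rfl⟩

theorem mem_smul_top_of_forall_apply_mem {ι : Type*} [Finite ι] {I : Ideal L} {x : ι → M}
    (hx : ∀ i, x i ∈ (I • ⊤ : Submodule L M)) : x ∈ (I • ⊤ : Submodule L (ι → M)) := by
  classical
  cases nonempty_fintype ι
  rw [← Finset.univ_sum_single x]
  refine sum_mem fun i _ ↦ ?_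
  exact Submodule.smul_top_le_comap_smul_top I (LinearMap.single L (fun _ ↦ M) i) (hx i)

end IdealSmul

section AlgebraIdealSmul

variable {L B : Type*} [CommRing L] [Ring B] [Algebra L B] {I : Ideal L}

theorem range_mulLeft_le_smul_top {x : B} (hx : x ∈ (I • ⊤ : Submodule L B)) :
    LinearMap.range (LinearMap.mulLeft L x) ≤ I • ⊤ := by
  rintro _ ⟨y, rfl⟩
  exact Submodule.smul_top_le_comap_smul_top I (LinearMap.mulRight L y) hx

theorem pow_mem_pow_smul_top {x : B} (hx : x ∈ (I • ⊤ : Submodule L B)) (n : ℕ) :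
    x ^ n ∈ (I ^ n • ⊤ : Submodule L B) :=
  range_pow_le_pow_smul_top (range_mulLeft_le_smul_top hx) n
    ⟨1, by rw [LinearMap.pow_mulLeft, LinearMap.mulLeft_apply, mul_one]⟩

theorem smul_top_eq_restrictScalars_map (I : Ideal L) :
    (I • ⊤ : Submodule L B) = (I.map (algebraMap L B)).restrictScalars L := by
  refine le_antisymm (Submodule.smul_le.2 fun r hr b _ ↦ ?_) fun x hx ↦ ?_
  · rw [Submodule.restrictScalars_mem, Algebra.smul_def, Algebra.commutes]
    exact Ideal.mul_mem_left _ b (Ideal.mem_map_of_mem _ hr)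
  · induction hx using Submodule.span_induction with
    | mem x hx =>
      obtain ⟨r, hr, rfl⟩ := hx
      rw [Algebra.algebraMap_eq_smul_one]
      exact Submodule.smul_mem_smul hr trivial
    | zero => exact zero_mem _
    | add x y _ _ hx hy => exact add_mem hx hy
    | smul b x _ hx => exact Submodule.smul_top_le_comap_smul_top I (LinearMap.mulLeft L b) hx

theorem exists_pow_mem_smul_top_of_map_mem_smul_top {W : Type*} [Ring W] [Algebra L W]
    [Module.Finite L B] {ψ : W →ₐ[L] B} (hψ : Function.Injective ψ) {w : W}
    (hw : ψ w ∈ (I • ⊤ : Submodule L B)) : ∃ n, w ^ n ∈ (I • ⊤ : Submodule L W) := by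
  obtain ⟨q, hq, -, hcoeff, hroot⟩ :=
    LinearMap.exists_monic_and_natDegree_eq_and_coeff_mem_pow_and_aeval_eq_zero
      L (Algebra.lmul L B (ψ w)) I (range_mulLeft_le_smul_top hw)
  have hw_root : Polynomial.aeval w q = 0 := by
    rw [Polynomial.aeval_algHom_apply, Polynomial.aeval_algHom_apply] at hroot
    exact hψ (by simpa using Algebra.lmul_injective (hroot.trans (map_zero _).symm))
  rw [hq.as_sum] at hw_root
  refine ⟨q.natDegree, ?_⟩
  simp only [map_add, map_pow, Polynomial.aeval_X, map_sum, map_mul, Polynomial.aeval_C,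
    ← Algebra.smul_def] at hw_root
  rw [eq_neg_of_add_eq_zero_left hw_root]
  refine neg_mem (sum_mem fun i hi ↦ Submodule.smul_mem_smul ?_ trivial)
  exact Ideal.pow_le_self (Nat.sub_pos_of_lt (Finset.mem_range.1 hi)).ne' (hcoeff i)

end AlgebraIdealSmul

section CentralIdempotent

variable {L B C : Type*} [CommRing L] [Ring B] [Algebra L B] [Ring C] {I : Ideal L}

theorem eq_zero_of_isIdempotentElem_of_range_le_smul_top {M : Type*} [AddCommGroup M] [Module L M]
    {n : ℕ} (hn : (I ^ n • ⊤ : Submodule L M) = ⊥) {f : Module.End L M} (hf : IsIdempotentElem f)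
    (hrange : LinearMap.range f ≤ I • ⊤) : f = 0 := by
  have hpow : f ^ (n + 1) = f := hf.pow_succ_eq n
  rw [← LinearMap.range_eq_bot, eq_bot_iff, ← hpow, ← hn]
  exact (range_pow_le_pow_smul_top hrange (n + 1)).trans
    (Submodule.smul_mono_left (Ideal.pow_le_pow_right n.le_succ))

theorem mul_mul_one_sub_eq_zero_of_commutator_mem_smul_top {n : ℕ}
    (hn : (I ^ n • ⊤ : Submodule L B) = ⊥) {e : B} (he : IsIdempotentElem e)
    (hcomm : ∀ x, e * x - x * e ∈ (I • ⊤ : Submodule L B)) (x : B) :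
    e * x * (1 - e) = 0 := by
  let f : Module.End L B := LinearMap.mulLeftRight L (e, 1 - e)
  have hf : IsIdempotentElem f := by
    ext y
    simp only [f, Module.End.mul_apply, LinearMap.mulLeftRight_apply]
    rw [← mul_assoc, ← mul_assoc, he.eq, mul_assoc _ (1 - e), he.one_sub.eq]
  have hrange : LinearMap.range f ≤ I • ⊤ := by
    rintro _ ⟨y, rfl⟩
    have h := hcomm (y * (1 - e))
    rwa [mul_assoc y, he.one_sub_mul_self, mul_zero, sub_zero, ← mul_assoc] at h
  exact LinearMap.congr_fun (eq_zero_of_isIdempotentElem_of_range_le_smul_top hn hf hrange) x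

theorem mem_center_of_commutator_mem_smul_top {n : ℕ} (hn : (I ^ n • ⊤ : Submodule L B) = ⊥)
    {e : B} (he : IsIdempotentElem e)
    (hcomm : ∀ x, e * x - x * e ∈ (I • ⊤ : Submodule L B)) : e ∈ Subring.center B := by
  refine Subring.mem_center_iff.2 fun x ↦ ?_
  have h₁ : e * x * (1 - e) = 0 :=
    mul_mul_one_sub_eq_zero_of_commutator_mem_smul_top hn he hcomm x
  have h₂ : (1 - e) * x * (1 - (1 - e)) = 0 := by
    refine mul_mul_one_sub_eq_zero_of_commutator_mem_smul_top hn he.one_sub (fun y ↦ ?_) x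
    have h := neg_mem (hcomm y)
    rwa [show -(e * y - y * e) = (1 - e) * y - y * (1 - e) by noncomm_ring] at h
  rw [sub_sub_cancel, sub_mul, one_mul, sub_mul, sub_eq_zero] at h₂
  rw [mul_sub, mul_one, sub_eq_zero] at h₁
  rw [h₁, h₂]

theorem exists_mem_center_map_eq_of_pow_smul_top_eq_bot {n : ℕ}
    (hn : (I ^ n • ⊤ : Submodule L B) = ⊥) {π : B →+* C} (hπ : Function.Surjective π)
    (hker : ∀ x, π x = 0 → x ∈ (I • ⊤ : Submodule L B)) {e : C} (he : IsIdempotentElem e)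
    (hcenter : e ∈ Subring.center C) : ∃ a ∈ Subring.center B, π a = e := by
  have hnil : ∀ x ∈ RingHom.ker π, IsNilpotent x := fun x hx ↦
    ⟨n, by simpa [hn] using pow_mem_pow_smul_top (hker x hx) n⟩
  obtain ⟨a, ha, rfl⟩ := exists_isIdempotentElem_eq_of_ker_isNilpotent π hnil e (hπ e) he
  refine ⟨a, mem_center_of_commutator_mem_smul_top hn ha fun x ↦ hker _ ?_, rfl⟩
  rw [map_sub, map_mul, map_mul, Subring.mem_center_iff.1 hcenter, sub_self]

theorem exists_map_eq_forall_commutator_mem_pow_smul_top {π : B →+* C}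
    (hπ : Function.Surjective π) (hker : ∀ x, π x = 0 ↔ x ∈ (I • ⊤ : Submodule L B)) {e : C}
    (he : IsIdempotentElem e) (hcenter : e ∈ Subring.center C) (n : ℕ) :
    ∃ a, π a = e ∧ ∀ b, a * b - b * a ∈ (I ^ n • ⊤ : Submodule L B) := by
  obtain rfl | hn := eq_or_ne n 0
  · obtain ⟨a, rfl⟩ := hπ e
    exact ⟨a, rfl, by simp⟩
  let q : B →ₐ[L] (L ⧸ I ^ n) ⊗[L] B := Algebra.TensorProduct.includeRight
  have hq : Function.Surjective q :=
    Algebra.TensorProduct.includeRight_surjective B Ideal.Quotient.mk_surjective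
  have hqker : ∀ x, q x = 0 ↔ x ∈ (I ^ n • ⊤ : Submodule L B) := fun x ↦ by
    rw [← LinearMap.ker_tensorProductMk]; rfl
  have hnilpotent : (I ^ n • ⊤ : Submodule L ((L ⧸ I ^ n) ⊗[L] B)) = ⊥ := by
    refine eq_bot_iff.2 (Submodule.smul_le.2 fun r hr y _ ↦ ?_)
    obtain ⟨x, rfl⟩ := hq y
    exact (map_smul q r x).symm.trans ((hqker _).2 (Submodule.smul_mem_smul hr trivial))
  have hker_le : RingHom.ker q.toRingHom ≤ RingHom.ker π := fun x hx ↦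
    (hker x).2 (Submodule.smul_mono_left (Ideal.pow_le_self hn) ((hqker x).1 hx))
  let π' : (L ⧸ I ^ n) ⊗[L] B →+* C := q.toRingHom.liftOfSurjective hq ⟨π, hker_le⟩
  have hπ' : ∀ x, π' (q x) = π x := q.toRingHom.liftOfRightInverse_comp_apply _ _ ⟨π, hker_le⟩
  have hker' : ∀ y, π' y = 0 → y ∈ (I • ⊤ : Submodule L ((L ⧸ I ^ n) ⊗[L] B)) := fun y hy ↦ by
    obtain ⟨x, rfl⟩ := hq y
    rw [hπ', hker] at hy
    exact Submodule.smul_top_le_comap_smul_top I q.toLinearMap hy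
  obtain ⟨c, hc, hce⟩ := exists_mem_center_map_eq_of_pow_smul_top_eq_bot hnilpotent
    (fun y ↦ (hπ y).imp' q fun x hx ↦ (hπ' x).trans hx) hker' he hcenter
  obtain ⟨a, rfl⟩ := hq c
  refine ⟨a, (hπ' a).symm.trans hce, fun b ↦ (hqker _).1 ?_⟩
  rw [map_sub, map_mul, map_mul, Subring.mem_center_iff.1 hc, sub_self]

end CentralIdempotent

section Commutator

variable {L B : Type*} [CommRing L] [Ring B] [Algebra L B] {ι : Type*}

variable (L) in
/-- The linear map `b ↦ (b * v i - v i * b)ᵢ`; it presents the center as a kernel when the family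
`v` spans `B`. -/
def commutatorMap (v : ι → B) : B →ₗ[L] ι → B :=
  LinearMap.pi fun i ↦ LinearMap.mulRight L (v i) - LinearMap.mulLeft L (v i)

theorem commutatorMap_apply (v : ι → B) (b : B) (i : ι) :
    commutatorMap L v b i = b * v i - v i * b :=
  rfl

theorem mem_ker_commutatorMap {v : ι → B} (hv : Submodule.span L (Set.range v) = ⊤) {b : B} :
    b ∈ LinearMap.ker (commutatorMap L v) ↔ b ∈ Subring.center B := by
  rw [LinearMap.mem_ker, Subring.mem_center_iff]
  refine ⟨fun hb x ↦ ?_, fun hb ↦ funext fun i ↦ sub_eq_zero.2 (hb (v i)).symm⟩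
  have hx : x ∈ Submodule.span L (Set.range v) := hv ▸ trivial
  induction hx using Submodule.span_induction with
  | mem x hx =>
    obtain ⟨i, rfl⟩ := hx
    exact (sub_eq_zero.1 (congrFun hb i)).symm
  | zero => rw [zero_mul, mul_zero]
  | add x y _ _ hx hy => rw [add_mul, mul_add, hx, hy]
  | smul r x _ hx => rw [smul_mul_assoc, mul_smul_comm, hx]

theorem exists_mem_center_map_eq_of_isIdempotentElem [IsNoetherianRing L] [Module.Finite L B]
    {C : Type*} [Ring C] {I : Ideal L} {π : B →+* C} (hπ : Function.Surjective π)
    (hker : ∀ x, π x = 0 ↔ x ∈ (I • ⊤ : Submodule L B)) {e : C} (he : IsIdempotentElem e)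
    (hcenter : e ∈ Subring.center C) : ∃ z ∈ Subring.center B, π z = e := by
  obtain ⟨m, v, hv⟩ := Module.Finite.exists_fin (R := L) (M := B)
  obtain ⟨n, hn⟩ := exists_comap_pow_smul_top_le_smul_top_sup_ker I (commutatorMap L v)
  obtain ⟨a, rfl, ha⟩ := exists_map_eq_forall_commutator_mem_pow_smul_top hπ hker he hcenter n
  have ha_comap : commutatorMap L v a ∈ (I ^ n • ⊤ : Submodule L (Fin m → B)) :=
    mem_smul_top_of_forall_apply_mem fun i ↦ ha (v i)
  obtain ⟨y, hy, z, hz, rfl⟩ := Submodule.mem_sup.1 (hn ha_comap)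
  exact ⟨z, (mem_ker_commutatorMap hv).1 hz, by rw [map_add, (hker y).2 hy, zero_add]⟩

end Commutator

section CenterBaseChange

variable (R S A : Type*) [CommRing R] [CommRing S] [Algebra R S] [Ring A] [Algebra R A]

/-- The canonical map `S ⊗ Z → S ⊗ A`, where `Z` is the center of `A`. -/
noncomputable abbrev centerBaseChange : S ⊗[R] Subalgebra.center R A →ₐ[R] S ⊗[R] A :=
  Algebra.TensorProduct.map (AlgHom.id R S) (Subalgebra.center R A).val

variable {R S A} {K : Type*} [CommRing K] [Algebra R K] {f : S →ₐ[R] K}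

theorem centerBaseChange_mem_center (w : S ⊗[R] Subalgebra.center R A) :
    centerBaseChange R S A w ∈ Subring.center (S ⊗[R] A) := by
  induction w with
  | zero => exact map_zero (centerBaseChange R S A) ▸ zero_mem _
  | add w w' hw hw' => exact map_add (centerBaseChange R S A) w w' ▸ add_mem hw hw'
  | tmul s z =>
    refine Subring.mem_center_iff.2 fun x ↦ ?_
    induction x with
    | zero => rw [zero_mul, mul_zero]
    | add x y hx hy => rw [add_mul, mul_add, hx, hy]
    | tmul t a =>
      simp only [Algebra.TensorProduct.map_tmul, Algebra.TensorProduct.tmul_mul_tmul,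
        AlgHom.coe_id, id_eq, Subalgebra.coe_val, mul_comm t s,
        Subalgebra.mem_center_iff.1 z.2 a]

theorem piRight_lTensor_commutatorMap {ι : Type*} [Fintype ι] [DecidableEq ι] (v : ι → A)
    (x : S ⊗[R] A) :
    TensorProduct.piRight R R S (fun _ : ι ↦ A) ((commutatorMap R v).lTensor S x) =
      commutatorMap R (fun i ↦ (1 : S) ⊗ₜ[R] v i) x := by
  induction x with
  | zero => simp only [map_zero]
  | add x y hx hy => simp only [map_add, hx, hy]
  | tmul s a =>
    ext i
    simp [commutatorMap_apply, TensorProduct.tmul_sub]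

theorem mem_range_centerBaseChange_of_mem_center [Module.Flat R S] [Module.Finite R A]
    {x : S ⊗[R] A} (hx : x ∈ Subring.center (S ⊗[R] A)) :
    x ∈ Set.range (centerBaseChange R S A) := by
  obtain ⟨m, v, hv⟩ := Module.Finite.exists_fin (R := R) (M := A)
  have hexact : Function.Exact (Subalgebra.center R A).val.toLinearMap (commutatorMap R v) :=
    fun a ↦ (mem_ker_commutatorMap hv).trans
      ⟨fun ha ↦ ⟨⟨a, ha⟩, rfl⟩, by rintro ⟨z, rfl⟩; exact z.2⟩
  refine (Module.Flat.lTensor_exact S hexact x).1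
    ((TensorProduct.piRight R R S fun _ : Fin m ↦ A).injective ?_)
  rw [piRight_lTensor_commutatorMap, map_zero]
  exact funext fun i ↦ sub_eq_zero.2 (Subring.mem_center_iff.1 hx _).symm

theorem tensorProduct_map_id_eq_zero_iff_mem_smul_top (hf : Function.Surjective f)
    (x : S ⊗[R] A) :
    Algebra.TensorProduct.map f (AlgHom.id R A) x = 0 ↔
      x ∈ (RingHom.ker f • ⊤ : Submodule S (S ⊗[R] A)) := by
  rw [smul_top_eq_restrictScalars_map, Submodule.restrictScalars_mem, ← RingHom.mem_ker,
    Algebra.TensorProduct.rTensor_ker _ hf]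
  rfl

theorem tensorProduct_map_id_surjective (hf : Function.Surjective f) :
    Function.Surjective (Algebra.TensorProduct.map f (AlgHom.id R A)) :=
  LinearMap.rTensor_surjective A hf

theorem tensorProduct_map_id_centerBaseChange (f : S →ₐ[R] K)
    (w : S ⊗[R] Subalgebra.center R A) :
    Algebra.TensorProduct.map f (AlgHom.id R A) (centerBaseChange R S A w) =
      centerBaseChange R K A (Algebra.TensorProduct.map f (AlgHom.id R _) w) := by
  have h : (Algebra.TensorProduct.map f (AlgHom.id R A)).comp (centerBaseChange R S A) =
      (centerBaseChange R K A).comp (Algebra.TensorProduct.map f (AlgHom.id R _)) := by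
    ext <;> simp
  exact DFunLike.congr_fun h w

theorem mem_range_centerBaseChange_of_isIdempotentElem [IsNoetherianRing S] [Module.Flat R S]
    [Module.Finite R A] (hf : Function.Surjective f) {e : K ⊗[R] A} (he : IsIdempotentElem e)
    (hcenter : e ∈ Subring.center (K ⊗[R] A)) : e ∈ Set.range (centerBaseChange R K A) := by
  obtain ⟨z, hz, rfl⟩ := exists_mem_center_map_eq_of_isIdempotentElem (L := S)
    (π := (Algebra.TensorProduct.map f (AlgHom.id R A)).toRingHom)
    (tensorProduct_map_id_surjective hf) (tensorProduct_map_id_eq_zero_iff_mem_smul_top hf)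
    he hcenter
  obtain ⟨w, rfl⟩ := mem_range_centerBaseChange_of_mem_center hz
  exact ⟨_, (tensorProduct_map_id_centerBaseChange f w).symm⟩

theorem isNilpotent_of_centerBaseChange_eq_zero [Module.Flat R S] [Module.Finite R A]
    (hf : Function.Surjective f) {w : K ⊗[R] Subalgebra.center R A}
    (hw : centerBaseChange R K A w = 0) : IsNilpotent w := by
  obtain ⟨y, rfl⟩ := tensorProduct_map_id_surjective hf w
  rw [← tensorProduct_map_id_centerBaseChange,
    tensorProduct_map_id_eq_zero_iff_mem_smul_top hf] at hw
  let ψ : S ⊗[R] Subalgebra.center R A →ₐ[S] S ⊗[R] A :=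
    Algebra.TensorProduct.map (AlgHom.id S S) (Subalgebra.center R A).val
  have hψ : Function.Injective ψ :=
    Module.Flat.lTensor_preserves_injective_linearMap (M := S)
      (Subalgebra.center R A).val.toLinearMap Subtype.val_injective
  obtain ⟨n, hn⟩ := exists_pow_mem_smul_top_of_map_mem_smul_top hψ hw
  exact ⟨n, by rw [← map_pow, tensorProduct_map_id_eq_zero_iff_mem_smul_top hf]; exact hn⟩

end CenterBaseChange

section Blocks

variable {C : Type*} [Ring C]

theorem isBlockIdemOn_iff_isBlockIdem {S : Set C} (hS : S ⊆ Subring.center C)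
    (hidem : ∀ f ∈ Subring.center C, IsIdempotentElem f → f ∈ S) {e : C} :
    IsBlockIdemOn S e ↔ IsBlockIdem e := by
  have hcomm : ∀ f ∈ S, ∀ x, f * x = x * f := fun f hf x ↦ (Subring.mem_center_iff.1 (hS hf) x).symm
  have hmem : ∀ f, (∀ x ∈ Set.univ, f * x = x * f) → IsIdempotentElem f → f ∈ S := fun f hf ↦
    hidem f (Subring.mem_center_iff.2 fun x ↦ (hf x trivial).symm)
  constructor
  · rintro ⟨heS, he, he₀, -, hsplit⟩
    exact ⟨trivial, he, he₀, fun x _ ↦ hcomm e heS x, fun f g _ _ hf hg hff hgg ↦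
      hsplit f g (hmem f hf hff) (hmem g hg hgg) (fun x _ ↦ hf x trivial) (fun x _ ↦ hg x trivial)
        hff hgg⟩
  · rintro ⟨-, he, he₀, hec, hsplit⟩
    exact ⟨hmem e hec he, he, he₀, fun x _ ↦ hec x trivial, fun f g hfS hgS _ _ ↦
      hsplit f g trivial trivial (fun x _ ↦ hcomm f hfS x) (fun x _ ↦ hcomm g hgS x)⟩

theorem isBlockIdem_coe_center_iff {e : Subring.center C} :
    IsBlockIdem (e : C) ↔ IsBlockIdem e := by
  rw [← isBlockIdemOn_iff_isBlockIdem (S := Subring.center C) subset_rfl fun f hf _ ↦ hf]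
  constructor
  · rintro ⟨-, he, he₀, -, hsplit⟩
    refine ⟨trivial, Subtype.ext he, fun h ↦ he₀ (congrArg Subtype.val h), fun x _ ↦ mul_comm e x,
      fun f g _ _ _ _ hf hg hfg hadd ↦ ?_⟩
    exact (hsplit f g f.2 g.2 (fun x _ ↦ (Subring.mem_center_iff.1 f.2 x).symm)
      (fun x _ ↦ (Subring.mem_center_iff.1 g.2 x).symm) (congrArg Subtype.val hf)
      (congrArg Subtype.val hg) (congrArg Subtype.val hfg) (congrArg Subtype.val hadd)).imp
        Subtype.ext Subtype.ext
  · rintro ⟨-, he, he₀, -, hsplit⟩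
    refine ⟨e.2, congrArg Subtype.val he, fun h ↦ he₀ (Subtype.ext h),
      fun x _ ↦ (Subring.mem_center_iff.1 e.2 x).symm, fun f g hf hg _ _ hff hgg hfg hadd ↦ ?_⟩
    exact (hsplit ⟨f, hf⟩ ⟨g, hg⟩ trivial trivial (fun x _ ↦ mul_comm _ x)
      (fun x _ ↦ mul_comm _ x) (Subtype.ext hff) (Subtype.ext hgg) (Subtype.ext hfg)
      (Subtype.ext hadd)).imp (congrArg Subtype.val) (congrArg Subtype.val)

theorem numBlocks_center : numBlocks (Subring.center C) = numBlocks C :=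
  Nat.card_congr
    { toFun := fun e ↦ ⟨e.1, isBlockIdem_coe_center_iff.2 e.2⟩
      invFun := fun e ↦
        ⟨⟨e.1, Subring.mem_center_iff.2 fun x ↦ (e.2.2.2.2.1 x trivial).symm⟩,
          isBlockIdem_coe_center_iff.1 e.2⟩
      left_inv := fun _ ↦ rfl
      right_inv := fun _ ↦ rfl }

variable {W W' : Type*} [CommRing W] [CommRing W']

theorem isBlockIdem_iff_isAtom {e : {e : W // IsIdempotentElem e}} :
    IsBlockIdem e.1 ↔ IsAtom e := by
  constructor
  · rintro ⟨-, -, he₀, -, hsplit⟩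
    refine ⟨fun h ↦ he₀ (congrArg Subtype.val h), fun f hfe ↦ ?_⟩
    have hmul : f.1 * e.1 = f.1 := hfe.le
    have hsub : IsIdempotentElem (e.1 - f.1) := f.2.sub e.2 hmul ((mul_comm _ _).trans hmul)
    obtain h | h := hsplit f.1 (e.1 - f.1) trivial trivial (fun x _ ↦ mul_comm _ x)
      (fun x _ ↦ mul_comm _ x) f.2 hsub (by rw [mul_sub, hmul, f.2.eq, sub_self])
      (add_sub_cancel _ _)
    · exact Subtype.ext h
    · exact absurd (Subtype.ext (sub_eq_zero.1 h).symm) hfe.ne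
  · intro he
    refine ⟨trivial, e.2, fun h ↦ he.1 (Subtype.ext h), fun x _ ↦ mul_comm _ x, ?_⟩
    intro f g _ _ _ _ hf _ hfg hadd
    have hle : (⟨f, hf⟩ : {e : W // IsIdempotentElem e}) ≤ e :=
      show f * e.1 = f by rw [← hadd, mul_add, hf.eq, hfg, add_zero]
    obtain h | h := he.le_iff.1 hle
    · exact Or.inl (congrArg Subtype.val h)
    · exact Or.inr (by simpa [← h] using hadd)

theorem numBlocks_eq_card_isAtom :
    numBlocks W = Nat.card {e : {e : W // IsIdempotentElem e} // IsAtom e} :=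
  Nat.card_congr
    { toFun := fun e ↦ ⟨⟨e.1, e.2.2.1⟩, isBlockIdem_iff_isAtom.1 e.2⟩
      invFun := fun e ↦ ⟨e.1.1, isBlockIdem_iff_isAtom.2 e.2⟩
      left_inv := fun _ ↦ rfl
      right_inv := fun _ ↦ rfl }

theorem numBlocks_eq_card_isAtom_of_orderIso {α : Type*} [PartialOrder α] [OrderBot α]
    (iso : {e : W // IsIdempotentElem e} ≃o α) : numBlocks W = Nat.card {a : α // IsAtom a} :=
  numBlocks_eq_card_isAtom.trans
    (Nat.card_congr (iso.toEquiv.subtypeEquiv fun e ↦ (iso.isAtom_iff e).symm))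

theorem numBlocks_eq_of_isNilpotent_ker (φ : W →+* W') (hker : ∀ w, φ w = 0 → IsNilpotent w)
    (hrange : ∀ e, IsIdempotentElem e → e ∈ Set.range φ) : numBlocks W = numBlocks W' := by
  have hinj : ∀ e f : W, IsIdempotentElem e → IsIdempotentElem f → φ e = φ f → e = f :=
    fun e f he hf h ↦ eq_of_isNilpotent_sub_of_isIdempotentElem he hf
      (hker _ (by rw [map_sub, h, sub_self]))
  have hsurj : ∀ e, IsIdempotentElem e → ∃ e', IsIdempotentElem e' ∧ φ e' = e := fun e he ↦
    exists_isIdempotentElem_eq_of_ker_isNilpotent φ hker e (hrange e he) he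
  let mapIdem : {e : W // IsIdempotentElem e} ≃ {e : W' // IsIdempotentElem e} :=
    Equiv.ofBijective (fun e ↦ ⟨φ e.1, e.2.map φ⟩)
      ⟨fun e f h ↦ Subtype.ext (hinj _ _ e.2 f.2 (congrArg Subtype.val h)), fun e ↦
        let ⟨e', he', h⟩ := hsurj e.1 e.2
        ⟨⟨e', he'⟩, Subtype.ext h⟩⟩
  have hle : ∀ {e f}, mapIdem e ≤ mapIdem f ↔ e ≤ f := fun {e f} ↦
    ⟨fun h ↦ hinj _ _ (e.2.mul f.2) e.2 ((map_mul φ _ _).trans h),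
      fun h ↦ (map_mul φ _ _).symm.trans (congrArg φ h)⟩
  exact (numBlocks_eq_card_isAtom_of_orderIso ⟨mapIdem, hle⟩).trans numBlocks_eq_card_isAtom.symm

theorem numBlocks_eq_card_primeSpectrum [DiscreteTopology (PrimeSpectrum W)] :
    numBlocks W = Nat.card (PrimeSpectrum W) := by
  let clopensIso : TopologicalSpace.Clopens (PrimeSpectrum W) ≃o Set (PrimeSpectrum W) :=
    { toFun := fun s ↦ s
      invFun := fun s ↦ ⟨s, isClopen_discrete s⟩
      left_inv := fun _ ↦ rfl
      right_inv := fun _ ↦ rfl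
      map_rel_iff' := Iff.rfl }
  rw [numBlocks_eq_card_isAtom_of_orderIso
    (PrimeSpectrum.isIdempotentElemEquivClopens.trans clopensIso)]
  refine (Nat.card_congr (Equiv.ofBijective (fun x ↦ ⟨{x}, Set.isAtom_singleton x⟩) ⟨?_, ?_⟩)).symm
  · exact fun x y h ↦ Set.singleton_injective (congrArg Subtype.val h)
  · rintro ⟨s, hs⟩
    obtain ⟨x, rfl⟩ := Set.isAtom_iff.1 hs
    exact ⟨x, rfl⟩

theorem numBlocks_eq_of_range_subset_center (φ : W →+* C) (hcenter : ∀ w, φ w ∈ Subring.center C)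
    (hker : ∀ w, φ w = 0 → IsNilpotent w)
    (hrange : ∀ e ∈ Subring.center C, IsIdempotentElem e → e ∈ Set.range φ) :
    numBlocks C = numBlocks W := by
  rw [← numBlocks_center]
  refine (numBlocks_eq_of_isNilpotent_ker (φ.codRestrict _ hcenter)
    (fun w hw ↦ hker w (congrArg Subtype.val hw)) fun e he ↦ ?_).symm
  obtain ⟨w, hw⟩ := hrange e e.2 (congrArg Subtype.val he)
  exact ⟨w, Subtype.ext hw⟩

end Blocks

section Fiber

theorem numBlocks_fiber_eq_card_comap_eq (R Z : Type*) [CommRing R] [CommRing Z] [Algebra R Z]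
    [Module.Finite R Z] (p : PrimeSpectrum R) :
    numBlocks (resFieldAt R p ⊗[R] Z) =
      Nat.card {Q : PrimeSpectrum Z // PrimeSpectrum.comap (algebraMap R Z) Q = p} := by
  have : IsArtinianRing (resFieldAt R p ⊗[R] Z) := IsArtinianRing.of_finite (resFieldAt R p) _
  exact numBlocks_eq_card_primeSpectrum.trans
    (Nat.card_congr (PrimeSpectrum.preimageEquivFiber R Z p).symm)

variable (R A : Type*) [CommRing R] [Ring A] [Algebra R A] [Module.Finite R A]
  (p : PrimeSpectrum R)

theorem isNilpotent_of_centerBaseChange_resFieldAt_eq_zero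
    {w : resFieldAt R p ⊗[R] Subalgebra.center R A}
    (hw : centerBaseChange R (resFieldAt R p) A w = 0) : IsNilpotent w :=
  isNilpotent_of_centerBaseChange_eq_zero
    (f := IsScalarTower.toAlgHom R (Localization.AtPrime p.asIdeal) (resFieldAt R p))
    IsLocalRing.residue_surjective hw

theorem mem_range_centerBaseChange_resFieldAt [IsNoetherianRing R] {e : resFieldAt R p ⊗[R] A}
    (hcenter : e ∈ Subring.center (resFieldAt R p ⊗[R] A)) (he : IsIdempotentElem e) :
    e ∈ Set.range (centerBaseChange R (resFieldAt R p) A) :=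
  mem_range_centerBaseChange_of_isIdempotentElem
    (f := IsScalarTower.toAlgHom R (Localization.AtPrime p.asIdeal) (resFieldAt R p))
    IsLocalRing.residue_surjective he hcenter

end Fiber

theorem stmt11_general (R A : Type*) [CommRing R] [IsNoetherianRing R] [Ring A] [Algebra R A]
    [Module.Finite R A] (p : PrimeSpectrum R) :
    {e | IsBlockIdemOn (Set.range (centerBaseChange R (resFieldAt R p) A)) e} =
      {e | IsBlockIdem e} ∧
    numBlocks (resFieldAt R p ⊗[R] A) =
      Nat.card {e // IsBlockIdemOn (Set.range (centerBaseChange R (resFieldAt R p) A)) e} ∧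
    numBlocks (resFieldAt R p ⊗[R] A) =
      numBlocks (resFieldAt R p ⊗[R] Subalgebra.center R A) ∧
    numBlocks (resFieldAt R p ⊗[R] A) =
      Nat.card {Q : PrimeSpectrum (Subalgebra.center R A) //
        PrimeSpectrum.comap (algebraMap R (Subalgebra.center R A)) Q = p} := by
  let φ := centerBaseChange R (resFieldAt R p) A
  have hidem : ∀ e ∈ Subring.center (resFieldAt R p ⊗[R] A), IsIdempotentElem e →
      e ∈ Set.range φ := fun e ↦ mem_range_centerBaseChange_resFieldAt R A p
  have hblocks : {e | IsBlockIdemOn (Set.range φ) e} = {e | IsBlockIdem e} :=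
    Set.ext fun e ↦ isBlockIdemOn_iff_isBlockIdem
      (Set.range_subset_iff.2 centerBaseChange_mem_center) hidem
  have hcenter : numBlocks (resFieldAt R p ⊗[R] A) =
      numBlocks (resFieldAt R p ⊗[R] Subalgebra.center R A) :=
    numBlocks_eq_of_range_subset_center φ.toRingHom centerBaseChange_mem_center
      (fun _ ↦ isNilpotent_of_centerBaseChange_resFieldAt_eq_zero R A p) hidem
  have : Module.Finite R (Subalgebra.center R A) :=
    inferInstanceAs (Module.Finite R (Subalgebra.toSubmodule (Subalgebra.center R A)))
  exact ⟨hblocks, Nat.card_congr (Equiv.setCongr hblocks.symm), hcenter,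
    hcenter.trans (numBlocks_fiber_eq_card_comap_eq R (Subalgebra.center R A) p)⟩

/-- **Theorem `mueller_maintheorem`.** For a finite flat algebra `A` over a noetherian domain `R`
with center `Z`: (i) every block idempotent of the fiber `A(p) = κ(p) ⊗[R] A` lies in the central
subalgebra `Z_p(A)` (the image of `Z(p) = κ(p) ⊗[R] Z`), i.e. the inclusion `Z_p(A) ⊆ A(p)` is
block bijective; (ii) there are canonical bijections
`Bl(A(p)) ≅ Bl(Z_p(A)) ≅ Bl(Z(p)) ≅ Υ⁻¹(p)`; in particular the number of blocks of `A(p)` equals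
the number of primes of `Z` lying over `p`. -/
theorem stmt11 (R : Type u) [CommRing R] [IsDomain R] [IsNoetherianRing R]
    (A : Type u) [Ring A] [Algebra R A] [Module.Finite R A] [Module.Flat R A]
    (p : PrimeSpectrum R) :
    {e : resFieldAt R p ⊗[R] A | IsBlockIdemOn
        (Set.range ⇑(Algebra.TensorProduct.map (AlgHom.id R (resFieldAt R p))
          (Subalgebra.center R A).val :
            resFieldAt R p ⊗[R] (Subalgebra.center R A) →ₐ[R] resFieldAt R p ⊗[R] A)) e} =
      {e : resFieldAt R p ⊗[R] A | IsBlockIdem e} ∧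
    numBlocks (resFieldAt R p ⊗[R] A) =
      Nat.card {e : resFieldAt R p ⊗[R] A // IsBlockIdemOn
        (Set.range ⇑(Algebra.TensorProduct.map (AlgHom.id R (resFieldAt R p))
          (Subalgebra.center R A).val :
            resFieldAt R p ⊗[R] (Subalgebra.center R A) →ₐ[R] resFieldAt R p ⊗[R] A)) e} ∧
    numBlocks (resFieldAt R p ⊗[R] A) =
      numBlocks (resFieldAt R p ⊗[R] (Subalgebra.center R A)) ∧
    numBlocks (resFieldAt R p ⊗[R] A) =
      Nat.card {Q : PrimeSpectrum (Subalgebra.center R A) //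
        PrimeSpectrum.comap (algebraMap R (Subalgebra.center R A)) Q = p} :=
  stmt11_general R A p
end
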